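/- Let Γ be a directed graph that is strongly connected, let G be a group, and let w be a map assigning to each edge of Γ an element of G. For a walk in the symmetrization of Γ (in which each edge e may be traversed forwards, contributing w(e), or backwards, contributing w(e)^{−1}), define its weight as the ordered product of the contributions of its steps. Then for every vertex v of Γ and every closed walk γ in the symmetrization of Γ based at v, the weight of γ belongs to the subgroup of G generated by the weights of the directed closed walks of Γ based at v. -/

import Mathlib

/-- `IsDirWalk src tgt u v es`: the list of edges `es` is a directed walk from `u` to `v`. -/
def IsDirWalk {V E : Type} (src tgt : E → V) : V → V → List E → Prop
  | u, v, [] => u = v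
  | u, v, e :: es => src e = u ∧ IsDirWalk src tgt (tgt e) v es

/-- A walk in the symmetrization: each step is an edge traversed forwards (`true`)
or backwards (`false`). -/
def IsSymWalk {V E : Type} (src tgt : E → V) : V → V → List (E × Bool) → Prop
  | u, v, [] => u = v
  | u, v, p :: ps =>
      (if p.2 then src p.1 else tgt p.1) = u ∧
      IsSymWalk src tgt (if p.2 then tgt p.1 else src p.1) v ps

/-- The weight of a directed walk: the ordered product `g_n ⋯ g_1` of the edge weights. -/
def dirWeight {E G : Type} [Group G] (w : E → G) : List E → G
  | [] => 1
  | e :: es => dirWeight w es * w e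

/-- The weight of a walk in the symmetrization: a forward step contributes `w e`,
a backward step contributes `(w e)⁻¹`; the weight is the ordered product `g_n ⋯ g_1`. -/
def symWeight {E G : Type} [Group G] (w : E → G) : List (E × Bool) → G
  | [] => 1
  | p :: ps => symWeight w ps * (if p.2 then w p.1 else (w p.1)⁻¹)

theorem isDirWalk_append_aux {V E : Type} (src tgt : E → V) (as bs : List E) :
    ∀ u m v : V, IsDirWalk src tgt u m as → IsDirWalk src tgt m v bs →
      IsDirWalk src tgt u v (as ++ bs) := by
  induction as with
  | nil =>
    intro u m v h1 h2
    have h : u = m := h1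
    subst h
    exact h2
  | cons e es ih =>
    intro u m v h1 h2
    exact ⟨h1.1, ih _ _ _ h1.2 h2⟩

theorem dirWeight_append_aux {E G : Type} [Group G] (w : E → G) (as bs : List E) :
    dirWeight w (as ++ bs) = dirWeight w bs * dirWeight w as := by
  induction as with
  | nil => simp [dirWeight]
  | cons e es ih => simp [dirWeight, ih, mul_assoc]

theorem symWeight_mul_mem_aux {V E G : Type} [Group G] (src tgt : E → V) (w : E → G)
    (hsc : ∀ u v : V, ∃ es : List E, IsDirWalk src tgt u v es)
    (v : V) (ps : List (E × Bool)) :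
    ∀ (u : V) (d : List E), IsSymWalk src tgt u v ps → IsDirWalk src tgt v u d →
      symWeight w ps * dirWeight w d ∈ Subgroup.closure
        {g : G | ∃ es : List E, IsDirWalk src tgt v v es ∧ dirWeight w es = g} := by
  induction ps with
  | nil =>
    intro u d h hd
    have h' : u = v := h
    subst h'
    exact Subgroup.subset_closure ⟨d, hd, by simp [symWeight]⟩
  | cons p ps ih =>
    intro u d h hd
    obtain ⟨e, b⟩ := p
    cases b with
    | true =>
      obtain ⟨h1, h2⟩ := h
      simp only [if_true] at h1 h2
      have := ih (tgt e) (d ++ [e]) h2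
        (isDirWalk_append_aux src tgt d [e] _ _ _ hd ⟨h1, rfl⟩)
      simpa [dirWeight_append_aux, dirWeight, symWeight, mul_assoc] using this
    | false =>
      obtain ⟨h1, h2⟩ := h
      simp only [Bool.false_eq_true, if_false] at h1 h2
      obtain ⟨a, ha⟩ := hsc v (src e)
      obtain ⟨b, hb⟩ := hsc u v
      have m1 := ih (src e) a h2 ha
      have hae : IsDirWalk src tgt v u (a ++ [e]) :=
        isDirWalk_append_aux src tgt a [e] _ _ _ ha ⟨rfl, h1⟩
      have key : ∀ c, IsDirWalk src tgt v u c → dirWeight w b * dirWeight w c ∈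
          Subgroup.closure
            {g : G | ∃ es : List E, IsDirWalk src tgt v v es ∧ dirWeight w es = g} :=
        fun c hc => Subgroup.subset_closure
          ⟨c ++ b, isDirWalk_append_aux src tgt c b _ _ _ hc hb, dirWeight_append_aux w c b⟩
      have m := mul_mem (mul_mem m1 (inv_mem (key _ hae))) (key _ hd)
      simpa [dirWeight_append_aux, dirWeight, symWeight, mul_assoc] using m

/-- For a strongly connected directed graph with group-valued edge weights, the weight of
any closed walk in the symmetrization based at `v` lies in the subgroup generated by the
weights of the directed closed walks based at `v`. -/
theorem stmt11 {V E G : Type} [Group G] (src tgt : E → V) (w : E → G)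
    (hsc : ∀ u v : V, ∃ es : List E, IsDirWalk src tgt u v es)
    (v : V) (ps : List (E × Bool)) (hps : IsSymWalk src tgt v v ps) :
    symWeight w ps ∈ Subgroup.closure
      {g : G | ∃ es : List E, IsDirWalk src tgt v v es ∧ dirWeight w es = g} := by
  have := symWeight_mul_mem_aux src tgt w hsc v ps v [] hps rfl
  simpa [dirWeight] using this
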